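/- arXiv:2604.00771 — 3 statements merged into one kernel-verified Lean document; each statement's English description precedes it below -/
import Mathlib

section
/- For all ordinals α: (1) ψ₁(α) < Ω₂; (2) ψ₁(0) = Ω; (3) if α ∈ C₁(α) then ψ₁(α+1) = ψ₁(α)·ω; (4) if α ∈ C₁(α) and α < Ω₂ then ψ₁(α) = ω^(Ω+α); (5) ψ₁(Ω₂) = ε_(Ω+1); (6) an ordinal β satisfies β < ψ₁(α) if and only if β ∈ C₁(α) and β < Ω₂. -/
noncomputable section

open Ordinal Cardinal

/-- `Ω` : the least uncountable ordinal. -/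
def Omega1 : Ordinal := (Cardinal.aleph 1).ord

/-- `Ω₂` : the least ordinal of cardinality `ℵ₂`. -/
def Omega2 : Ordinal := (Cardinal.aleph 2).ord

/-- An ordinal is additive principal if it is nonzero and closed under addition
of strictly smaller ordinals. -/
def AddPrincipal (γ : Ordinal) : Prop :=
  γ ≠ 0 ∧ ∀ ξ η : Ordinal, ξ < γ → η < γ → ξ + η < γ

/-- `ψ₂ β := ω ^ (Ω₂ + β)`. -/
def psi2 (β : Ordinal) : Ordinal := omega0 ^ (Omega2 + β)

/-- `C₁(α)` : the least set of ordinals containing all ordinals `< Ω`, closed under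
`ψ₂`, closed under sums of additive principal members, and containing
`ψ₁ β = min {γ | γ ∉ C₁(β)}` for every `β ∈ C₁(α)` with `β < α` and `β ∈ C₁(β)`. -/
def C1 (α : Ordinal) : Set Ordinal :=
  ⋂₀ {S : Set Ordinal |
      (∀ β < Omega1, β ∈ S) ∧
      (∀ β ∈ S, psi2 β ∈ S) ∧
      (∀ l : List Ordinal, l ≠ [] → (∀ b ∈ l, b ∈ S ∧ AddPrincipal b) → l.sum ∈ S) ∧
      (∀ β, β ∈ S → β < α → β ∈ C1 β → sInf {γ : Ordinal | γ ∉ C1 β} ∈ S)}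
termination_by α
decreasing_by all_goals assumption

/-- The collapsing function `ψ₁`. -/
def psi1 (α : Ordinal) : Ordinal := sInf {γ : Ordinal | γ ∉ C1 α}

/-- The closure conditions. -/
def ClosedC (α : Ordinal) (S : Set Ordinal) : Prop :=
  (∀ β < Omega1, β ∈ S) ∧
  (∀ β ∈ S, psi2 β ∈ S) ∧
  (∀ l : List Ordinal, l ≠ [] → (∀ b ∈ l, b ∈ S ∧ AddPrincipal b) → l.sum ∈ S) ∧
  (∀ β, β ∈ S → β < α → β ∈ C1 β → psi1 β ∈ S)

theorem C1_eq (α : Ordinal) : C1 α = ⋂₀ {S | ClosedC α S} := by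
  rw [C1]; rfl

theorem C1_sub {α : Ordinal} {S : Set Ordinal} (h : ClosedC α S) : C1 α ⊆ S := by
  rw [C1_eq]; exact Set.sInter_subset_of_mem h

theorem C1_closed (α : Ordinal) : ClosedC α (C1 α) := by
  have key : ∀ x, x ∈ C1 α ↔ ∀ S, ClosedC α S → x ∈ S := by
    intro x; rw [C1_eq]; rfl
  refine ⟨fun β h => ?_, fun β h => ?_, fun l hl h => ?_, fun β h h1 h2 => ?_⟩
  · rw [key]; intro S hS; exact hS.1 β h
  · rw [key]; intro S hS; exact hS.2.1 β (C1_sub hS h)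
  · rw [key]; intro S hS
    exact hS.2.2.1 l hl (fun b hb => ⟨C1_sub hS (h b hb).1, (h b hb).2⟩)
  · rw [key]; intro S hS; exact hS.2.2.2 β (C1_sub hS h) h1 h2

theorem C1_mono {α β : Ordinal} (h : α ≤ β) : C1 α ⊆ C1 β := by
  have H := C1_closed β
  exact C1_sub ⟨H.1, H.2.1, H.2.2.1, fun γ hγ h1 h2 => H.2.2.2 γ hγ (h1.trans_le h) h2⟩

theorem addPrincipal_iff {γ : Ordinal} : AddPrincipal γ ↔ γ ≠ 0 ∧ IsPrincipal (· + ·) γ := Iff.rfl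

theorem addPrincipal_opow (γ : Ordinal) : AddPrincipal (omega0 ^ γ) :=
  ⟨(opow_pos _ omega0_pos).ne', fun _ _ h1 h2 => isPrincipal_add_omega0_opow γ h1 h2⟩

theorem addPrincipal_exists {γ : Ordinal} (h : AddPrincipal γ) : ∃ δ : Ordinal, γ = omega0 ^ δ := by
  rcases isPrincipal_add_iff_zero_or_omega0_opow.1 (addPrincipal_iff.1 h).2 with h' | ⟨δ, h'⟩
  · exact absurd h' h.1
  · exact ⟨δ, h'.symm⟩

theorem opow_ord_eq {c : Cardinal} (hc : ℵ₀ < c) : omega0 ^ c.ord = c.ord := by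
  apply op_eq_self_of_isPrincipal (op := (· ^ ·)) (a := omega0)
  · rw [← ord_aleph0]; exact ord_lt_ord.2 hc
  · exact isNormal_opow one_lt_omega0
  · exact isPrincipal_opow_ord hc.le
  · exact isSuccLimit_ord hc.le

theorem opow_Omega1 : omega0 ^ Omega1 = Omega1 := opow_ord_eq (by simp)
theorem opow_Omega2 : omega0 ^ Omega2 = Omega2 := opow_ord_eq (by simp)
theorem Omega1_lt_Omega2 : Omega1 < Omega2 := by
  unfold Omega1 Omega2
  rw [ord_lt_ord, aleph_lt_aleph]
  exact one_lt_two
theorem Omega1_pos : 0 < Omega1 := by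
  rw [← opow_Omega1]; exact opow_pos _ omega0_pos

theorem sum_lt_of_principal {γ : Ordinal} (h : AddPrincipal γ) :
    ∀ l : List Ordinal, (∀ b ∈ l, b < γ) → l.sum < γ
  | [], _ => by simpa using pos_iff_ne_zero.2 h.1
  | a :: l, H => by
    rw [List.sum_cons]
    exact h.2 _ _ (H a (by simp)) (sum_lt_of_principal h l fun b hb => H b (by simp [hb]))

theorem le_sum_of_mem' {b : Ordinal} : ∀ l : List Ordinal, b ∈ l → b ≤ l.sum
  | [], h => by simp at h
  | a :: l, h => by
    rw [List.sum_cons]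
    rcases List.mem_cons.1 h with rfl | h
    · exact le_self_add
    · exact (le_sum_of_mem' l h).trans le_add_self

theorem Omega2_le_psi2 (β : Ordinal) : Omega2 ≤ psi2 β := by
  unfold psi2
  exact le_self_add.trans (right_le_opow _ one_lt_omega0)

/-- Bounding criterion. -/
theorem C1_bound {α γ : Ordinal} (h1 : Omega1 ≤ γ) (h2 : AddPrincipal γ)
    (h3 : ∀ β, β < γ ∨ Omega2 ≤ β → β < α → β ∈ C1 β → psi1 β < γ) :
    ∀ x ∈ C1 α, x < Omega2 → x < γ := by
  have : C1 α ⊆ {x | x < γ ∨ Omega2 ≤ x} := by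
    apply C1_sub
    refine ⟨fun β h => Or.inl (h.trans_le h1), fun β _ => Or.inr (Omega2_le_psi2 β), ?_,
      fun β h h' h'' => Or.inl (h3 β h h' h'')⟩
    intro l _ hl
    by_cases H : ∀ b ∈ l, b < γ
    · exact Or.inl (sum_lt_of_principal h2 l H)
    · push Not at H
      obtain ⟨b, hb, hb'⟩ := H
      rcases (hl b hb).1 with h | h
      · exact absurd h hb'.not_gt
      · exact Or.inr (h.trans (le_sum_of_mem' l hb))
  intro x hx hx'
  exact (this hx).resolve_right hx'.not_ge

/-- One closure stage. -/
def stage (S : Set Ordinal) : Set Ordinal :=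
  S ∪ (psi2 '' S ∪ ((fun l : List S => (l.map Subtype.val).sum) '' Set.univ ∪ psi1 '' S))

def stages : ℕ → Set Ordinal
  | 0 => Set.Iio Omega1
  | n + 1 => stage (stages n)

theorem stages_mono : Monotone stages :=
  monotone_nat_of_le_succ fun _ => Set.subset_union_left

theorem stages_card (n : ℕ) : #(stages n) ≤ aleph 1 := by
  induction n with
  | zero =>
    have : #(Set.Iio Omega1) ≤ aleph 1 := by
      rw [Cardinal.mk_Iio_ordinal]; simp [Omega1]
    exact this
  | succ n ih =>
    have h0 : (ℵ₀ : Cardinal) ≤ aleph 1 := aleph0_le_aleph 1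
    have hl : #(List (stages n)) ≤ aleph 1 := (mk_list_le_max _).trans (max_le h0 ih)
    have un : ∀ A B : Set Ordinal, #A ≤ aleph 1 → #B ≤ aleph 1 → #(A ∪ B : Set Ordinal) ≤ aleph 1 :=
      fun A B hA hB => (mk_union_le A B).trans (add_le_of_le h0 hA hB)
    refine un _ _ ih (un _ _ (mk_image_le.trans ih) (un _ _ ?_ (mk_image_le.trans ih)))
    rw [Set.image_univ]
    exact mk_range_le.trans hl

theorem list_stages : ∀ l : List Ordinal, (∀ b ∈ l, ∃ n, b ∈ stages n) →
    ∃ n, ∀ b ∈ l, b ∈ stages n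
  | [], _ => ⟨0, by simp⟩
  | a :: l, h => by
    obtain ⟨n, hn⟩ := h a (by simp)
    obtain ⟨m, hm⟩ := list_stages l fun b hb => h b (by simp [hb])
    refine ⟨max n m, fun b hb => ?_⟩
    rcases List.mem_cons.1 hb with rfl | hb
    · exact stages_mono (le_max_left _ _) hn
    · exact stages_mono (le_max_right _ _) (hm b hb)

theorem C1_sub_stages (α : Ordinal) : C1 α ⊆ ⋃ n, stages n := by
  apply C1_sub
  simp only [ClosedC, Set.mem_iUnion]
  refine ⟨fun β h => ⟨0, h⟩, ?_, ?_, ?_⟩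
  · rintro β ⟨n, h⟩
    exact ⟨n + 1, Or.inr (Or.inl ⟨β, h, rfl⟩)⟩
  · intro l _ h
    obtain ⟨n, hn⟩ := list_stages l fun b hb => (h b hb).1
    refine ⟨n + 1, Or.inr (Or.inr (Or.inl ⟨l.attach.map fun b => ⟨b.1, hn b.1 b.2⟩, trivial, ?_⟩))⟩
    simp [List.map_map, Function.comp_def]
  · rintro β ⟨n, h⟩ _ _
    exact ⟨n + 1, Or.inr (Or.inr (Or.inr ⟨β, h, rfl⟩))⟩

theorem C1_card (α : Ordinal) : #(C1 α) ≤ aleph 1 := by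
  refine (mk_le_mk_of_subset (C1_sub_stages α)).trans ?_
  have := mk_iUnion_le_lift stages
  simp only [Cardinal.lift_id', Cardinal.lift_uzero, mk_nat, lift_aleph0] at this
  refine this.trans ?_
  refine mul_le_of_le (aleph0_le_aleph 1) (aleph0_le_aleph 1) (ciSup_le' fun n => ?_)
  simpa using stages_card n

theorem exists_notMem (α : Ordinal) : ∃ γ < Omega2, γ ∉ C1 α := by
  by_contra H
  push Not at H
  have h1 : #(Set.Iio Omega2) ≤ #(C1 α) := mk_le_mk_of_subset H
  have h2 := h1.trans (C1_card α)
  rw [Cardinal.mk_Iio_ordinal] at h2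
  simp only [Omega2, card_ord, lift_aleph] at h2
  rw [aleph_le_aleph] at h2
  revert h2
  simp

theorem psi1_notMem (α : Ordinal) : psi1 α ∉ C1 α := by
  obtain ⟨γ, _, h⟩ := exists_notMem α
  exact csInf_mem (s := {γ : Ordinal | γ ∉ C1 α}) ⟨γ, h⟩

theorem psi1_lt (α : Ordinal) : psi1 α < Omega2 := by
  obtain ⟨γ, h', h⟩ := exists_notMem α
  exact (csInf_le' (s := {γ : Ordinal | γ ∉ C1 α}) h).trans_lt h'

theorem mem_of_lt {α β : Ordinal} (h : β < psi1 α) : β ∈ C1 α := by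
  by_contra H
  exact (csInf_le' (s := {γ : Ordinal | γ ∉ C1 α}) H).not_gt h

theorem le_psi1 {α γ : Ordinal} (h : ∀ β < γ, β ∈ C1 α) : γ ≤ psi1 α := by
  by_contra H
  exact psi1_notMem α (h _ (not_le.1 H))

theorem Omega1_le_psi1 (α : Ordinal) : Omega1 ≤ psi1 α :=
  le_psi1 (C1_closed α).1

theorem psi1_mono {α β : Ordinal} (h : α ≤ β) : psi1 α ≤ psi1 β :=
  le_psi1 fun _ hγ => C1_mono h (mem_of_lt hγ)

theorem exists_list (ξ : Ordinal) :
    ∃ l : List Ordinal, l.sum = ξ ∧ ∀ b ∈ l, AddPrincipal b := by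
  induction ξ using WellFoundedLT.induction with
  | ind ξ ih =>
    by_cases h : ξ = 0
    · exact ⟨[], by simp [h], by simp⟩
    · obtain ⟨l, hl, hl'⟩ := ih _ (sub_omega0_opow_log_lt h)
      refine ⟨omega0 ^ log omega0 ξ :: l, ?_, ?_⟩
      · rw [List.sum_cons, hl]
        exact Ordinal.add_sub_cancel_of_le (opow_log_le_self _ h)
      · intro b hb
        rcases List.mem_cons.1 hb with rfl | hb
        · exact addPrincipal_opow _
        · exact hl' b hb

theorem add_mem {α ξ η : Ordinal} (h1 : ξ < psi1 α) (h2 : η < psi1 α) : ξ + η ∈ C1 α := by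
  obtain ⟨l, hl, hl'⟩ := exists_list ξ
  obtain ⟨m, hm, hm'⟩ := exists_list η
  by_cases h : l ++ m = []
  · have : l = [] ∧ m = [] := by simpa using h
    apply (C1_closed α).1
    rw [← hl, ← hm, this.1, this.2]
    simpa using Omega1_pos
  · have := (C1_closed α).2.2.1 (l ++ m) h (by
      intro b hb
      rcases List.mem_append.1 hb with hb | hb
      · exact ⟨mem_of_lt ((hl ▸ le_sum_of_mem' l hb).trans_lt h1), hl' b hb⟩
      · exact ⟨mem_of_lt ((hm ▸ le_sum_of_mem' m hb).trans_lt h2), hm' b hb⟩)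
    rwa [List.sum_append, hl, hm] at this

theorem psi1_principal (α : Ordinal) : AddPrincipal (psi1 α) := by
  refine ⟨(Omega1_pos.trans_le (Omega1_le_psi1 α)).ne', fun ξ η h1 h2 => ?_⟩
  by_contra H
  rw [not_lt] at H
  have e := Ordinal.add_sub_cancel_of_le h1.le
  have h3 : psi1 α - ξ ≤ η := Ordinal.sub_le.2 H
  exact psi1_notMem α (e ▸ add_mem h1 (h3.trans_lt h2))

theorem lt_psi1_iff (α β : Ordinal) : β < psi1 α ↔ β ∈ C1 α ∧ β < Omega2 := by
  refine ⟨fun h => ⟨mem_of_lt h, h.trans (psi1_lt α)⟩, fun ⟨h1, h2⟩ => ?_⟩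
  -- the membership in `C1 α` has to be carried along
  have : C1 α ⊆ {x | x ∈ C1 α ∧ (x < psi1 α ∨ Omega2 ≤ x)} := by
    have H := C1_closed α
    apply C1_sub
    refine ⟨fun β h => ⟨H.1 β h, Or.inl (h.trans_le (Omega1_le_psi1 α))⟩,
      fun β h => ⟨H.2.1 β h.1, Or.inr (Omega2_le_psi2 β)⟩, fun l h0 hl => ⟨?_, ?_⟩,
      fun β h h' h'' => ?_⟩
    · exact H.2.2.1 l h0 fun b hb => ⟨(hl b hb).1.1, (hl b hb).2⟩
    · by_cases K : ∀ b ∈ l, b < psi1 α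
      · exact Or.inl (sum_lt_of_principal (psi1_principal α) l K)
      · push Not at K
        obtain ⟨b, hb, hb'⟩ := K
        rcases (hl b hb).1.2 with h | h
        · exact absurd h hb'.not_gt
        · exact Or.inr (h.trans (le_sum_of_mem' l hb))
    · have m := H.2.2.2 β h.1 h' h''
      exact ⟨m, Or.inl ((psi1_mono h'.le).lt_of_ne fun e => psi1_notMem α (e ▸ m))⟩
  exact (this h1).2.resolve_right h2.not_ge

theorem psi1_lt_psi1 {α β : Ordinal} (h : β < α) (hβ : β ∈ C1 β) : psi1 β < psi1 α :=
  (lt_psi1_iff _ _).2 ⟨(C1_closed α).2.2.2 β (C1_mono h.le hβ) h hβ, psi1_lt β⟩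

theorem psi1_le_of {α γ : Ordinal} (h1 : Omega1 ≤ γ) (h2 : AddPrincipal γ)
    (h3 : ∀ β, β < γ ∨ Omega2 ≤ β → β < α → β ∈ C1 β → psi1 β < γ) : psi1 α ≤ γ := by
  by_contra H
  rw [not_le] at H
  exact lt_irrefl _ (C1_bound h1 h2 h3 γ (mem_of_lt H) (H.trans (psi1_lt α)))

theorem psi1_zero : psi1 0 = Omega1 := by
  apply le_antisymm _ (Omega1_le_psi1 0)
  refine psi1_le_of le_rfl ?_ fun β _ h => absurd h not_lt_zero
  rw [← opow_Omega1]; exact addPrincipal_opow _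

theorem psi1_succ (α : Ordinal) (h : α ∈ C1 α) : psi1 (α + 1) = psi1 α * omega0 := by
  obtain ⟨δ, hδ⟩ := addPrincipal_exists (psi1_principal α)
  have hlt : psi1 α < psi1 (α + 1) := psi1_lt_psi1 (lt_add_one α) h
  obtain ⟨ε, hε⟩ := addPrincipal_exists (psi1_principal (α + 1))
  have e : psi1 α * omega0 = omega0 ^ (δ + 1) := by rw [hδ, opow_add, opow_one]
  apply le_antisymm
  · have h0 : psi1 α < psi1 α * omega0 := by
      rw [e, hδ]; exact (opow_lt_opow_iff_right one_lt_omega0).2 (lt_add_one δ)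
    refine psi1_le_of ((Omega1_le_psi1 α).trans h0.le) (e ▸ addPrincipal_opow _) ?_
    intro β _ hβ _
    exact (psi1_mono (Order.lt_add_one_iff.1 hβ)).trans_lt h0
  · rw [e, hε]
    rw [hδ, hε, opow_lt_opow_iff_right one_lt_omega0] at hlt
    exact (opow_le_opow_iff_right one_lt_omega0).2 (Order.add_one_le_iff.2 hlt)

theorem psi1_step {α : Ordinal} (hα : α ≤ Omega2)
    (H : ∀ β < α, β ∈ C1 β ∧ psi1 β = omega0 ^ (Omega1 + β)) :
    psi1 α = omega0 ^ (Omega1 + α) := by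
  apply le_antisymm
  · refine psi1_le_of ?_ (addPrincipal_opow _) ?_
    · exact le_self_add.trans (right_le_opow _ one_lt_omega0)
    · intro β _ hβ _
      rw [(H β hβ).2, opow_lt_opow_iff_right one_lt_omega0]
      exact (add_lt_add_iff_left _).2 hβ
  · obtain ⟨δ, hδ⟩ := addPrincipal_exists (psi1_principal α)
    have h1 : Omega1 ≤ δ := by
      have := Omega1_le_psi1 α
      rwa [hδ, ← opow_Omega1, opow_le_opow_iff_right one_lt_omega0] at this
    rw [hδ, opow_le_opow_iff_right one_lt_omega0, ← Ordinal.add_sub_cancel_of_le h1]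
    refine (add_le_add_iff_left _).2 (le_of_forall_lt fun β hβ => ?_)
    have := psi1_lt_psi1 hβ (H β hβ).1
    rw [(H β hβ).2, hδ, opow_lt_opow_iff_right one_lt_omega0,
      ← Ordinal.add_sub_cancel_of_le h1] at this
    exact (add_lt_add_iff_left _).1 this

theorem psi1_const {β γ : Ordinal} (h : psi1 β ≤ β) (hγ : γ ≤ Omega2) : psi1 γ ≤ psi1 β := by
  refine psi1_le_of (Omega1_le_psi1 β) (psi1_principal β) ?_
  rintro δ (h1 | h1) h2 h3
  · exact psi1_lt_psi1 (h1.trans_le h) h3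
  · exact absurd (h2.trans_le hγ) h1.not_gt

theorem psi1_eq (α : Ordinal) (h : α ∈ C1 α) (hα : α < Omega2) :
    psi1 α = omega0 ^ (Omega1 + α) := by
  induction α using WellFoundedLT.induction with
  | ind α ih =>
    refine psi1_step hα.le fun β hβ => ?_
    have hb : β ∈ C1 β := by
      apply mem_of_lt
      by_contra K
      rw [not_lt] at K
      have h1 := psi1_const K hα.le
      have h2 := (lt_psi1_iff α α).2 ⟨h, hα⟩
      exact (h2.trans_le (h1.trans K)).not_gt hβ
    exact ⟨hb, ih β hβ hb (hβ.trans hα)⟩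

theorem psi1_Omega2 : psi1 Omega2 = sInf {ξ : Ordinal | Omega1 < ξ ∧ omega0 ^ ξ = ξ} := by
  have hmem : Omega2 ∈ {ξ : Ordinal | Omega1 < ξ ∧ omega0 ^ ξ = ξ} :=
    ⟨Omega1_lt_Omega2, opow_Omega2⟩
  have hle := csInf_le' hmem
  have hin := csInf_mem ⟨_, hmem⟩
  have hmin : ∀ α, α < sInf {ξ : Ordinal | Omega1 < ξ ∧ omega0 ^ ξ = ξ} →
      ¬ (Omega1 < α ∧ omega0 ^ α = α) := 
    fun α h h1 =>
      (csInf_le' (s := {ξ : Ordinal | Omega1 < ξ ∧ omega0 ^ ξ = ξ}) h1).not_gt h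
  generalize sInf {ξ : Ordinal | Omega1 < ξ ∧ omega0 ^ ξ = ξ} = ε at hle hin hmin
  obtain ⟨h1, h2⟩ := hin
  have key : ∀ α < ε, α ∈ C1 α ∧ psi1 α = omega0 ^ (Omega1 + α) := by
    intro α
    induction α using WellFoundedLT.induction with
    | ind α ih =>
      intro hα
      have e := psi1_step (hα.le.trans hle) fun β hβ => ih β hβ (hβ.trans hα)
      refine ⟨mem_of_lt ?_, e⟩
      by_contra K
      rw [not_lt, e] at K
      refine hmin α hα ⟨?_, le_antisymm (le_trans ?_ K) (right_le_opow _ one_lt_omega0)⟩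
      · have h3 : Omega1 ≤ α :=
          le_self_add.trans ((right_le_opow (Omega1 + α) one_lt_omega0).trans K)
        refine lt_of_lt_of_le ?_ K
        rw [← opow_Omega1, opow_lt_opow_iff_right one_lt_omega0, opow_Omega1]
        exact lt_add_of_pos_right _ (Omega1_pos.trans_le h3)
      · exact (opow_le_opow_iff_right one_lt_omega0).2 le_add_self
  have e := psi1_step hle key
  have h3 : Omega1 + ε = ε := by
    have := isPrincipal_add_omega0_opow ε
    rw [h2] at this
    exact this.add_eq_right h1
  rw [h3, h2] at e
  exact le_antisymm ((psi1_const e.le le_rfl).trans e.le) (e ▸ psi1_mono hle)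

/-- Properties of the function `ψ₁`. -/
theorem psi1_properties :
    (∀ α : Ordinal, psi1 α < Omega2) ∧
    (psi1 0 = Omega1) ∧
    (∀ α : Ordinal, α ∈ C1 α → psi1 (α + 1) = psi1 α * omega0) ∧
    (∀ α : Ordinal, α ∈ C1 α → α < Omega2 → psi1 α = omega0 ^ (Omega1 + α)) ∧
    (psi1 Omega2 = sInf {ξ : Ordinal | Omega1 < ξ ∧ omega0 ^ ξ = ξ}) ∧
    (∀ α β : Ordinal, β < psi1 α ↔ β ∈ C1 α ∧ β < Omega2) := by
  exact ⟨psi1_lt, psi1_zero, psi1_succ, psi1_eq, psi1_Omega2, lt_psi1_iff⟩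

end
end

section
/- For all ordinals α: (1) ψ₀(α) < Ω; (2) ψ₀(0) = ω; (3) if α ∈ C₀(α) then ψ₀(α+1) = ψ₀(α)·ω; (4) if α ∈ C₀(α) and α < Ω then ψ₀(α) = ω^(1+α); (5) ψ₀(Ω) = ε₀; (6) for α < Ω₂, an ordinal β satisfies β < ψ₀(α) if and only if β ∈ C₀(α) and β < Ω. -/
noncomputable section

open Ordinal Cardinal

/-- `C₀(α)` : the least set of ordinals containing `0` and `1`, closed under
`ψ₂`, closed under sums of additive principal members, containing `ψ₁ β` for
`β ∈ C₀(α)` with `β ∈ C₁(β)`, and containing `ψ₀ β = min {γ | γ ∉ C₀(β)}`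
for every `β ∈ C₀(α)` with `β < α` and `β ∈ C₀(β)`. -/
def C0 (α : Ordinal) : Set Ordinal :=
  ⋂₀ {S : Set Ordinal |
      (0 : Ordinal) ∈ S ∧ (1 : Ordinal) ∈ S ∧
      (∀ β ∈ S, psi2 β ∈ S) ∧
      (∀ l : List Ordinal, l ≠ [] → (∀ b ∈ l, b ∈ S ∧ AddPrincipal b) → l.sum ∈ S) ∧
      (∀ β ∈ S, β ∈ C1 β → psi1 β ∈ S) ∧
      (∀ β, β ∈ S → β < α → β ∈ C0 β → sInf {γ : Ordinal | γ ∉ C0 β} ∈ S)}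
termination_by α
decreasing_by all_goals assumption

/-- The collapsing function `ψ₀`. -/
def psi0 (α : Ordinal) : Ordinal := sInf {γ : Ordinal | γ ∉ C0 α}

universe u

def TT (A : Set Ordinal.{u}) : ℕ → Set Ordinal.{u}
  | 0 => A
  | n+1 => TT A n ∪ (psi2 '' TT A n) ∪ (psi1 '' TT A n) ∪ (psi0 '' TT A n) ∪
      (fun p : Ordinal × Ordinal => p.1 + p.2) '' (TT A n ×ˢ TT A n)

def TU (A : Set Ordinal.{u}) : Set Ordinal.{u} := ⋃ n, TT A n

theorem TT_mono (A : Set Ordinal.{u}) : Monotone (TT A) :=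
  monotone_nat_of_le_succ fun n x hx => by
    simp only [TT, Set.mem_union]; tauto

theorem TU_cl {A : Set Ordinal.{u}} {x : Ordinal.{u}} (hx : x ∈ TU A) :
    psi2 x ∈ TU A ∧ psi1 x ∈ TU A ∧ psi0 x ∈ TU A := by
  obtain ⟨n, hn⟩ := Set.mem_iUnion.1 hx
  refine ⟨?_, ?_, ?_⟩ <;> refine Set.mem_iUnion.2 ⟨n+1, ?_⟩ <;> simp only [TT, Set.mem_union]
  · exact Or.inl (Or.inl (Or.inl (Or.inr ⟨x, hn, rfl⟩)))
  · exact Or.inl (Or.inl (Or.inr ⟨x, hn, rfl⟩))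
  · exact Or.inl (Or.inr ⟨x, hn, rfl⟩)

theorem TU_add {A : Set Ordinal.{u}} {x y : Ordinal.{u}} (hx : x ∈ TU A) (hy : y ∈ TU A) :
    x + y ∈ TU A := by
  obtain ⟨n, hn⟩ := Set.mem_iUnion.1 hx
  obtain ⟨m, hm⟩ := Set.mem_iUnion.1 hy
  refine Set.mem_iUnion.2 ⟨max n m+1, ?_⟩
  simp only [TT, Set.mem_union]
  exact Or.inr ⟨(x, y), ⟨TT_mono A (le_max_left _ _) hn, TT_mono A (le_max_right _ _) hm⟩, rfl⟩

theorem TU_sum {A : Set Ordinal.{u}} (h0 : 0 ∈ A) (l : List Ordinal.{u})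
    (h : ∀ b ∈ l, b ∈ TU A) : l.sum ∈ TU A := by
  induction l with
  | nil => exact Set.mem_iUnion.2 ⟨0, h0⟩
  | cons a l ih =>
    rw [List.sum_cons]
    exact TU_add (h a (by simp)) (ih fun b hb => h b (by simp [hb]))

theorem TU_countable {A : Set Ordinal.{u}} (h : A.Countable) : (TU A).Countable := by
  refine Set.countable_iUnion fun n => ?_
  induction n with
  | zero => exact h
  | succ n ih =>
    exact ((((ih.union (ih.image _)).union (ih.image _)).union (ih.image _)).union
      ((ih.prod ih).image _))

theorem TU_small {A : Set Ordinal.{u}} (h : Small.{u} A) : Small.{u} (TU A) := by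
  have : ∀ n, Small.{u} (TT A n) := by
    intro n
    induction n with
    | zero => exact h
    | succ n ih =>
      have : Small.{u} (TT A n ×ˢ TT A n : Set (Ordinal.{u} × Ordinal.{u})) :=
        small_of_injective (Equiv.Set.prod (TT A n) (TT A n)).injective
      unfold TT
      infer_instance
  unfold TU
  infer_instance

theorem C1_sub_s1 (α : Ordinal.{u}) : C1 α ⊆ TU (Set.Iio Omega1) := by
  rw [C1]
  apply Set.sInter_subset_of_mem
  have h0 : (0 : Ordinal.{u}) ∈ Set.Iio Omega1.{u} := by
    simp only [Omega1, Set.mem_Iio]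
    rw [Cardinal.lt_ord]; simpa using Cardinal.aleph_pos 1
  refine ⟨fun β hβ => Set.mem_iUnion.2 ⟨0, hβ⟩, fun β hβ => (TU_cl hβ).1,
    fun l _ h => TU_sum h0 l fun b hb => (h b hb).1, fun β hβ _ _ => (TU_cl hβ).2.1⟩

theorem C0_sub (α : Ordinal.{u}) : C0 α ⊆ TU {0, 1} := by
  rw [C0]
  apply Set.sInter_subset_of_mem
  refine ⟨Set.mem_iUnion.2 ⟨0, by simp [TT]⟩, Set.mem_iUnion.2 ⟨0, by simp [TT]⟩,
    fun β hβ => (TU_cl hβ).1,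
    fun l _ h => TU_sum (by simp) l fun b hb => (h b hb).1, fun β hβ _ => (TU_cl hβ).2.1,
    fun β hβ _ _ => (TU_cl hβ).2.2⟩

theorem psi1_ge (α : Ordinal.{u}) : Omega1 ≤ psi1 α := by
  have hne : {γ : Ordinal.{u} | γ ∉ C1 α}.Nonempty := by
    by_contra hcon
    rw [Set.not_nonempty_iff_eq_empty] at hcon
    have huniv : (Set.univ : Set Ordinal.{u}) ⊆ TU (Set.Iio Omega1) := fun x _ => by
      apply C1_sub_s1 α
      by_contra hx
      exact (hcon ▸ (show x ∈ {γ : Ordinal.{u} | γ ∉ C1 α} from hx) : x ∈ (∅ : Set Ordinal.{u}))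
    have := TU_small (A := Set.Iio Omega1.{u}) inferInstance
    have h2 := small_subset huniv
    exact not_small_ordinal.{u, u} ((small_univ_iff).1 h2)
  by_contra h
  have := csInf_mem hne
  refine this ?_
  have h' : psi1 α < Omega1 := not_le.1 h
  change psi1 α ∈ C1 α
  rw [C1]
  rintro S ⟨hS, -⟩
  exact hS _ h'

theorem psi2_ge (α : Ordinal.{u}) : Omega1 ≤ psi2 α := by
  have h1 : Omega1.{u} ≤ Omega2 := by
    unfold Omega1 Omega2
    exact Cardinal.ord_le_ord.2 (Cardinal.aleph_le_aleph.2 one_le_two)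
  exact (h1.trans (le_add_right le_rfl)).trans (Ordinal.right_le_opow _ Ordinal.one_lt_omega0)

theorem lt_psi0 {α β : Ordinal.{u}} (h : β < psi0 α) : β ∈ C0 α := by
  by_contra h'
  exact absurd (csInf_le' (show β ∈ {γ : Ordinal | γ ∉ C0 α} from h')) (not_le.2 h)

theorem not_countable_Iio : ¬ (Set.Iio Omega1.{u}).Countable := by
  intro h
  rw [← Cardinal.le_aleph0_iff_set_countable, Ordinal.mk_Iio_ordinal] at h
  simp only [Omega1, Cardinal.card_ord, Cardinal.lift_aleph] at h
  exact absurd h (not_le.2 (by simpa using Cardinal.aleph0_lt_aleph_one))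

theorem psi0_lt (α : Ordinal.{u}) : psi0 α < Omega1 := by
  by_contra h
  push Not at h
  apply not_countable_Iio.{u}
  apply (TU_countable (A := {0, 1}) (by simp)).mono
  exact fun x hx => C0_sub α (lt_psi0 (lt_of_lt_of_le hx h))

theorem psi0_notMem (α : Ordinal.{u}) : psi0 α ∉ C0 α := by
  have hne : {γ : Ordinal.{u} | γ ∉ C0 α}.Nonempty := by
    by_contra hcon
    apply not_countable_Iio.{u}
    apply (TU_countable (A := {0, 1}) (by simp)).mono
    intro x _
    apply C0_sub α
    by_contra hx
    exact hcon ⟨x, hx⟩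
  exact csInf_mem hne

theorem C0_mono {α β : Ordinal.{u}} (h : α ≤ β) : C0 α ⊆ C0 β := by
  rw [C0.eq_1 α, C0.eq_1 β]
  apply Set.sInter_subset_sInter
  rintro S ⟨h0, h1, h2, h3, h4, h5⟩
  exact ⟨h0, h1, h2, h3, h4, fun γ hγ hl => h5 γ hγ (hl.trans_le h)⟩

theorem psi0_mono {α β : Ordinal.{u}} (h : α ≤ β) : psi0 α ≤ psi0 β := by
  by_contra hc
  exact psi0_notMem β (C0_mono h (lt_psi0 (not_le.1 hc)))

theorem C0_zero (α : Ordinal.{u}) : 0 ∈ C0 α := by rw [C0]; exact fun S h => h.1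
theorem C0_one (α : Ordinal.{u}) : 1 ∈ C0 α := by rw [C0]; exact fun S h => h.2.1
theorem C0_sum (α : Ordinal.{u}) (l : List Ordinal.{u})
    (hl : ∀ b ∈ l, b ∈ C0 α ∧ AddPrincipal b) : l.sum ∈ C0 α := by
  by_cases hn : l = []
  · subst hn; exact C0_zero α
  rw [C0] at hl ⊢
  exact fun S h => h.2.2.2.1 l hn fun b hb => ⟨(hl b hb).1 S h, (hl b hb).2⟩
theorem C0_psi0 {α β : Ordinal.{u}} (h1 : β < α) (h2 : β ∈ C0 β) : psi0 β ∈ C0 α := by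
  have h3 := C0_mono h1.le h2
  rw [C0] at h3 ⊢
  exact fun S h => h.2.2.2.2.2 β (h3 S h) h1 h2

theorem psi0_strict {α β : Ordinal.{u}} (h1 : β < α) (h2 : β ∈ C0 β) : psi0 β < psi0 α :=
  lt_of_le_of_ne (psi0_mono h1.le) fun h => psi0_notMem α (h ▸ C0_psi0 h1 h2)

theorem cnf_list (ξ : Ordinal.{u}) :
    ∃ l : List Ordinal.{u}, (∀ b ∈ l, b ≤ ξ ∧ AddPrincipal b) ∧ l.sum = ξ := by
  induction ξ using WellFoundedLT.induction with
  | ind ξ ih =>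
    by_cases h0 : ξ = 0
    · exact ⟨[], by simp, by simp [h0]⟩
    by_cases hp : AddPrincipal ξ
    · exact ⟨[ξ], by simp [hp], by simp⟩
    have : ∃ a b, a < ξ ∧ b < ξ ∧ ξ ≤ a + b := by
      by_contra hc
      push Not at hc
      exact hp ⟨h0, fun a b ha hb => hc a b ha hb⟩
    obtain ⟨a, b, ha, hb, hab⟩ := this
    have hb' : ξ - a < ξ := (Ordinal.sub_le.2 hab).trans_lt hb
    obtain ⟨l, hl, hs⟩ := ih a ha
    obtain ⟨m, hm, ht⟩ := ih _ hb'
    refine ⟨l ++ m, ?_, ?_⟩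
    · intro c hc
      rcases List.mem_append.1 hc with hc | hc
      · exact ⟨(hl c hc).1.trans ha.le, (hl c hc).2⟩
      · exact ⟨(hm c hc).1.trans hb'.le, (hm c hc).2⟩
    · rw [List.sum_append, hs, ht, Ordinal.add_sub_cancel_of_le ha.le]

theorem psi0_gt_one (α : Ordinal.{u}) : 1 < psi0 α := by
  have h0 : psi0 α ≠ 0 := fun h => psi0_notMem α (h ▸ C0_zero α)
  have h1 : psi0 α ≠ 1 := fun h => psi0_notMem α (h ▸ C0_one α)
  exact lt_of_le_of_ne (Order.one_le_iff_pos.2 (pos_iff_ne_zero.2 h0)) h1.symm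

theorem psi0_prin (α : Ordinal.{u}) : AddPrincipal (psi0 α) := by
  refine ⟨(zero_lt_one.trans (psi0_gt_one α)).ne', fun ξ η hξ hη => ?_⟩
  by_contra hc
  push Not at hc
  apply psi0_notMem α
  have hd : psi0 α - ξ < psi0 α := (Ordinal.sub_le.2 hc).trans_lt hη
  obtain ⟨l, hl, hs⟩ := cnf_list ξ
  obtain ⟨m, hm, ht⟩ := cnf_list (psi0 α - ξ)
  have h : (l ++ m).sum = psi0 α := by
    rw [List.sum_append, hs, ht, Ordinal.add_sub_cancel_of_le hξ.le]
  have h2 : (l ++ m).sum ∈ C0 α := by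
    apply C0_sum
    intro c hc
    rcases List.mem_append.1 hc with hc | hc
    · exact ⟨lt_psi0 ((hl c hc).1.trans_lt hξ), (hl c hc).2⟩
    · exact ⟨lt_psi0 ((hm c hc).1.trans_lt hd), (hm c hc).2⟩
  rwa [h] at h2

theorem C0_bound {α δ : Ordinal.{u}} (hδ : AddPrincipal δ) (h1 : 1 < δ)
    (h : ∀ β < α, β ∈ C0 β → psi0 β < δ) {γ : Ordinal.{u}} (hγ : γ ∈ C0 α) (hγ1 : γ < Omega1) :
    γ < δ := by
  have : C0 α ⊆ {γ | Omega1 ≤ γ ∨ γ < δ} := by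
    rw [C0]
    apply Set.sInter_subset_of_mem
    refine ⟨Or.inr (zero_lt_one.trans h1), Or.inr h1, fun β _ => Or.inl (psi2_ge β), ?_,
      fun β _ _ => Or.inl (psi1_ge β), fun β _ h3 h4 => Or.inr (h β h3 h4)⟩
    intro l _ hl
    clear * - hl hδ
    induction l with
    | nil => exact Or.inr (pos_iff_ne_zero.2 hδ.1)
    | cons a l ih =>
      rw [List.sum_cons]
      rcases ih (fun b hb => hl b (by simp [hb])) with h | h
      · exact Or.inl (h.trans (le_add_self))
      · rcases (hl a (by simp)).1 with h' | h'
        · exact Or.inl (h'.trans (le_self_add))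
        · exact Or.inr (hδ.2 _ _ h' h)
  rcases this hγ with h | h
  · exact absurd hγ1 (not_lt.2 h)
  · exact h

theorem psi0_le {α δ : Ordinal.{u}} (hδ : AddPrincipal δ) (h1 : 1 < δ)
    (h : ∀ β < α, β ∈ C0 β → psi0 β < δ) : psi0 α ≤ δ := by
  by_contra hc
  push Not at hc
  exact lt_irrefl _ (C0_bound hδ h1 h (lt_psi0 hc) (hc.trans (psi0_lt α)))

theorem psi0_iff {α β : Ordinal.{u}} : β < psi0 α ↔ β ∈ C0 α ∧ β < Omega1 :=
  ⟨fun h => ⟨lt_psi0 h, h.trans (psi0_lt α)⟩, fun h =>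
    C0_bound (psi0_prin α) (psi0_gt_one α) (fun _ => psi0_strict) h.1 h.2⟩

theorem prin_opow (γ : Ordinal.{u}) : AddPrincipal (omega0 ^ γ) :=
  ⟨(Ordinal.opow_pos _ Ordinal.omega0_pos).ne', fun _ _ h1 h2 =>
    Ordinal.isPrincipal_add_omega0_opow γ h1 h2⟩

theorem prin_exists {γ : Ordinal.{u}} (h : AddPrincipal γ) : ∃ δ : Ordinal.{u}, γ = omega0 ^ δ := by
  rcases Ordinal.isPrincipal_add_iff_zero_or_omega0_opow.1 (fun a b h1 h2 => h.2 a b h1 h2) with h0 | ⟨d, hd⟩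
  · exact absurd h0 h.1
  · exact ⟨d, hd.symm⟩

def eps : Ordinal.{u} := sInf {ξ : Ordinal | omega0 ^ ξ = ξ}

theorem eps_fix : omega0 ^ eps.{u} = eps :=
  csInf_mem (s := {ξ : Ordinal.{u} | omega0 ^ ξ = ξ})
    ⟨_, Ordinal.nfp_fp (Ordinal.isNormal_opow Ordinal.one_lt_omega0) 0⟩

theorem one_lt_opow {α : Ordinal.{u}} : 1 < omega0 ^ (1 + α) := by
  refine Ordinal.one_lt_omega0.trans_le ?_
  conv_lhs => rw [← Ordinal.opow_one omega0]
  exact Ordinal.opow_le_opow_right Ordinal.omega0_pos (le_self_add)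

theorem eps_ge : omega0 ≤ eps.{u} := by
  have h : eps.{u} ≠ 0 := by
    intro h
    have := eps_fix.{u}
    rw [h] at this
    simp at this
  rw [← eps_fix]
  exact Ordinal.left_le_opow _ (pos_iff_ne_zero.2 h)

theorem lt_of_lt_eps {β : Ordinal.{u}} (h : β < eps) : β < omega0 ^ (1 + β) := by
  have h1 : β < omega0 ^ β := by
    refine lt_of_le_of_ne (Ordinal.right_le_opow _ Ordinal.one_lt_omega0) fun h2 => ?_
    exact absurd (csInf_le' (show β ∈ {ξ : Ordinal | omega0 ^ ξ = ξ} from h2.symm)) (not_le.2 h)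
  exact h1.trans_le (Ordinal.opow_le_opow_right Ordinal.omega0_pos (le_add_self))

theorem psi0_small (α : Ordinal.{u}) : α ≤ eps → psi0 α = omega0 ^ (1 + α) := by
  induction α using WellFoundedLT.induction with
  | ind α ih =>
    intro hα
    have key : ∀ β < α, psi0 β = omega0 ^ (1 + β) := fun β hβ => ih β hβ (hβ.le.trans hα)
    apply le_antisymm
    · refine psi0_le (prin_opow _) one_lt_opow fun β hβ _ => ?_
      rw [key β hβ]
      exact (Ordinal.opow_lt_opow_iff_right Ordinal.one_lt_omega0).2 (by simpa using hβ)
    · obtain ⟨γ, hγ⟩ := prin_exists (psi0_prin α)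
      rw [hγ]
      apply Ordinal.opow_le_opow_right Ordinal.omega0_pos
      by_contra hc
      push Not at hc
      have h1 : 1 ≤ γ := by
        rw [Order.one_le_iff_pos, pos_iff_ne_zero]
        rintro rfl
        have := psi0_gt_one α
        simp [hγ] at this
      have h2 : 1 + (γ - 1) = γ := Ordinal.add_sub_cancel_of_le h1
      have h3 : γ - 1 < α := by
        rw [← h2] at hc; simpa using hc
      have hm : γ - 1 ∈ C0 (γ - 1) := by
        apply lt_psi0
        rw [key _ h3]
        exact lt_of_lt_eps (h3.trans_le hα)
      have h4 := psi0_strict h3 hm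
      rw [key _ h3, h2, hγ] at h4
      exact lt_irrefl _ h4

theorem psi0_eps : psi0 eps.{u} = eps := by
  rw [psi0_small _ le_rfl, Ordinal.one_add_of_omega0_le eps_ge, eps_fix]

theorem psi0_large (α : Ordinal.{u}) : eps ≤ α → α ≤ Omega1 → psi0 α = eps := by
  induction α using WellFoundedLT.induction with
  | ind α ih =>
    intro h1 h2
    apply le_antisymm
    · refine psi0_le (eps_fix ▸ prin_opow _) (Ordinal.one_lt_omega0.trans_le eps_ge) fun β hβ hm => ?_
      rcases lt_or_ge β eps with h | h
      · exact (psi0_strict h hm).trans_eq psi0_eps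
      · have h3 := psi0_iff.2 ⟨hm, hβ.trans_le h2⟩
        rw [ih β hβ h (hβ.le.trans h2)] at h3
        exact absurd h3 (not_lt.2 h)
    · exact psi0_eps.symm.trans_le (psi0_mono h1)

/-- Properties of the function `ψ₀`. -/
theorem psi0_properties :
    (∀ α : Ordinal, psi0 α < Omega1) ∧
    (psi0 0 = omega0) ∧
    (∀ α : Ordinal, α ∈ C0 α → psi0 (α + 1) = psi0 α * omega0) ∧
    (∀ α : Ordinal, α ∈ C0 α → α < Omega1 → psi0 α = omega0 ^ (1 + α)) ∧
    (psi0 Omega1 = sInf {ξ : Ordinal | omega0 ^ ξ = ξ}) ∧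
    (∀ α β : Ordinal, α < Omega2 → (β < psi0 α ↔ β ∈ C0 α ∧ β < Omega1)) := by
  refine ⟨psi0_lt, ?_, ?_, ?_, ?_, fun α β _ => psi0_iff⟩
  · simpa using psi0_small 0 zero_le
  · intro α hα
    have hs := psi0_strict (Order.lt_add_one_iff.2 le_rfl) hα
    obtain ⟨γ, hγ⟩ := prin_exists (psi0_prin α)
    obtain ⟨γ', hγ'⟩ := prin_exists (psi0_prin (α + 1))
    have hlt : psi0 α < psi0 α * omega0 := by
      rw [hγ, ← Ordinal.opow_succ]
      exact (Ordinal.opow_lt_opow_iff_right Ordinal.one_lt_omega0).2 (Order.lt_succ _)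
    apply le_antisymm
    · refine psi0_le ?_ ((psi0_gt_one α).trans hlt) fun β hβ _ => ?_
      · rw [hγ, ← Ordinal.opow_succ]; exact prin_opow _
      · exact (psi0_mono (Order.lt_add_one_iff.1 hβ)).trans_lt hlt
    · rw [hγ, hγ', Ordinal.opow_lt_opow_iff_right Ordinal.one_lt_omega0] at hs
      rw [hγ, hγ', ← Ordinal.opow_succ]
      exact Ordinal.opow_le_opow_right Ordinal.omega0_pos (Order.succ_le_of_lt hs)
  · intro α hα h1
    apply psi0_small
    by_contra hc
    push Not at hc
    have h3 := psi0_iff.2 ⟨hα, h1⟩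
    rw [psi0_large α hc.le h1.le] at h3
    exact lt_asymm h3 hc
  · exact psi0_large _ (psi0_eps ▸ psi0_lt eps).le le_rfl

end
end

section
/- Let Λ be an ordinal equipped with a system of fundamental sequences satisfying the Bachmann property, and let (ξₙ)ₙ∈ℕ be a sequence of ordinals below Λ such that ξₙ[n+1] ≤ ξₙ₊₁ ≤ ξₙ for all n. Then for all n, ξₙ ≥ ξ₀[0][1]⋯[n], the ordinal obtained from ξ₀ by successively applying the fundamental sequence at indices 0, 1, …, n. -/
/-- If `Λ` carries a system of fundamental sequences `fs` satisfying the Bachmann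
property, and `(ξ n)` is a sequence of ordinals below `Λ` with
`fs (ξ n) (n+1) ≤ ξ (n+1) ≤ ξ n` for all `n`, then for every `n` the ordinal
`ξ₀[0][1]⋯[n]` (obtained from `ξ 0` by successively applying the fundamental
sequence at indices `0, 1, …, n`) is `≤ ξ n`. -/
theorem descent_majorizes_fundamental_iterates
    (Λ : Ordinal) (fs : Ordinal → ℕ → Ordinal)
    (h_lt : ∀ α, α < Λ → ∀ n, fs α n < Λ)
    (h_le : ∀ α, α < Λ → ∀ n, fs α n ≤ α)
    (h_eq : ∀ α, α < Λ → ∀ n, (fs α n = α ↔ α = 0))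
    (h_mono : ∀ α, α < Λ → ∀ n m : ℕ, n ≤ m → fs α n ≤ fs α m)
    (h_bachmann : ∀ α β : Ordinal, α < Λ → β < Λ → ∀ k : ℕ,
      fs α k < β → β < α → fs α k ≤ fs β 1)
    (ξ : ℕ → Ordinal) (hξ : ∀ n, ξ n < Λ)
    (h_step : ∀ n, fs (ξ n) (n + 1) ≤ ξ (n + 1) ∧ ξ (n + 1) ≤ ξ n) :
    ∀ n : ℕ,
      (Nat.rec (motive := fun _ => Ordinal) (fs (ξ 0) 0)
        (fun n ih => fs ih (n + 1)) n) ≤ ξ n := by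
  let R : ℕ → Ordinal → Ordinal → Prop :=
    fun n => Relation.ReflTransGen (fun a b => a < Λ ∧ b = fs a n)
  have A : ∀ (α : Ordinal) (k m : ℕ), α < Λ → 1 ≤ m → k ≤ m → ∀ β : Ordinal,
      fs α k ≤ β → β ≤ α → R m β (fs α k) := by
    intro α k m hα hm hk β
    induction β using WellFoundedLT.induction with
    | ind β ih =>
      intro h1 h2
      rcases h1.eq_or_lt with h | h
      · subst h; exact Relation.ReflTransGen.refl
      · have hβ : β < Λ := lt_of_le_of_lt h2 hα
        have hne : β ≠ 0 := by
          rintro rfl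
          exact absurd h (not_lt.mpr zero_le)
        have hlt : fs β m < β :=
          lt_of_le_of_ne (h_le β hβ m) (fun e => hne ((h_eq β hβ m).1 e))
        have hge : fs α k ≤ fs β m := by
          rcases h2.eq_or_lt with e | e
          · rw [e]; exact h_mono α hα k m hk
          · exact (h_bachmann α β hα hβ k h e).trans (h_mono β hβ 1 m hm)
        exact Relation.ReflTransGen.head ⟨hβ, rfl⟩ (ih _ hlt hge (hlt.le.trans h2))
  have B : ∀ (n m : ℕ) (a b : Ordinal), 1 ≤ m → n ≤ m → R n a b → R m a b := by
    intro n m a b hm hnm h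
    induction h with
    | refl => exact Relation.ReflTransGen.refl
    | tail _ h2 ih =>
      obtain ⟨h3, rfl⟩ := h2
      exact ih.trans (A _ n m h3 hm hnm _ (h_le _ h3 n) le_rfl)
  have C : ∀ (n : ℕ) (a b : Ordinal), R n a b → b ≤ a := by
    intro n a b h
    induction h with
    | refl => exact le_rfl
    | tail _ h2 ih =>
      obtain ⟨h3, rfl⟩ := h2
      exact (h_le _ h3 n).trans ih
  intro n
  apply C (n + 1)
  induction n with
  | zero => exact A (ξ 0) 0 1 (hξ 0) le_rfl (Nat.zero_le _) _ (h_le _ (hξ 0) 0) le_rfl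
  | succ n ih =>
    have key : R (n + 2) (ξ (n + 1)) (fs (ξ n) (n + 1)) :=
      A (ξ n) (n + 1) (n + 2) (hξ n) (by omega) (by omega) _ (h_step n).1 (h_step n).2
    have ho := lt_of_le_of_lt (C _ _ _ ih) (hξ n)
    change R (n + 2) (ξ (n + 1)) (fs _ (n + 1))
    generalize (Nat.rec (motive := fun _ => Ordinal) (fs (ξ 0) 0)
        (fun n ih => fs ih (n + 1)) n) = o at ih ho ⊢
    rcases Relation.ReflTransGen.cases_head ih with e | ⟨c, ⟨_, rfl⟩, hc⟩
    · rw [← e]; exact key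
    · exact (key.trans (B (n + 1) (n + 2) _ _ (by omega) (by omega) hc)).trans
        (A o (n + 1) (n + 2) ho (by omega) (by omega) _ (h_le _ ho _) le_rfl)
end
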